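/- Berg–Jordán reduction lemma: let G be a 3-vertex-connected (2,3)-circuit with at least five vertices. Then G has a vertex v of degree 3 with neighbours x,y,z such that the graph obtained from G by deleting v (and its three incident edges) and adding one new edge between two of x,y,z is again a (2,3)-circuit. -/

import Mathlib

open Finset

/-- A finite simple graph given by a finite vertex set of natural numbers and a finite set of
edges (unordered pairs of distinct vertices). -/
structure FinGraph where
  verts : Finset ℕ
  edges : Finset (Sym2 ℕ)
  not_isDiag : ∀ e ∈ edges, ¬ e.IsDiag
  mem_verts : ∀ e ∈ edges, ∀ v ∈ e, v ∈ verts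

/-- Adjacency in a `FinGraph`. -/
def FinGraph.Adj (G : FinGraph) (a b : ℕ) : Prop := s(a, b) ∈ G.edges

/-- `(V', E')` is a subgraph of `G`: the vertices and edges come from `G` and every endpoint
of an edge of `E'` lies in `V'`. -/
def SubgraphPair (G : FinGraph) (V' : Finset ℕ) (E' : Finset (Sym2 ℕ)) : Prop :=
  V' ⊆ G.verts ∧ E' ⊆ G.edges ∧ ∀ e ∈ E', ∀ v ∈ e, v ∈ V'

/-- Vertex addition: add a new vertex `v` of degree 2 joined to two distinct existing
vertices `a` and `b`. -/
def VertexAddition (G G' : FinGraph) : Prop :=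
  ∃ v a b : ℕ, v ∉ G.verts ∧ a ∈ G.verts ∧ b ∈ G.verts ∧ a ≠ b ∧
    G'.verts = insert v G.verts ∧
    G'.edges = insert s(v, a) (insert s(v, b) G.edges)

/-- Edge splitting: remove an edge `xy`, add a new vertex `v` of degree 3 joined to `x`, `y`
and a third existing vertex `z` distinct from `x` and `y`. -/
def EdgeSplit (G G' : FinGraph) : Prop :=
  ∃ v x y z : ℕ, v ∉ G.verts ∧ x ∈ G.verts ∧ y ∈ G.verts ∧ z ∈ G.verts ∧
    z ≠ x ∧ z ≠ y ∧ s(x, y) ∈ G.edges ∧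
    G'.verts = insert v G.verts ∧
    G'.edges = insert s(v, x) (insert s(v, y) (insert s(v, z) (G.edges.erase s(x, y))))

/-- `G` is a (2,3)-circuit: `|E| = 2|V| − 2` and every proper subgraph with at least one edge
satisfies `|E'| ≤ 2|V'| − 3`. -/
def Circuit23 (G : FinGraph) : Prop :=
  (G.edges.card : ℤ) = 2 * G.verts.card - 2 ∧
  ∀ V' E', SubgraphPair G V' E' → (V' ≠ G.verts ∨ E' ≠ G.edges) → E'.Nonempty →
    (E'.card : ℤ) ≤ 2 * V'.card - 3

/-- The graph obtained from `G` by deleting the vertex set `S` is connected: any two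
remaining vertices are joined by a walk avoiding `S`. -/
def ConnectedOff (G : FinGraph) (S : Finset ℕ) : Prop :=
  ∀ a ∈ G.verts, a ∉ S → ∀ b ∈ G.verts, b ∉ S →
    Relation.ReflTransGen (fun x y => G.Adj x y ∧ x ∉ S ∧ y ∉ S) a b

/-- `G` is 3-vertex-connected: it has more than 3 vertices and remains connected after
deleting any set of fewer than 3 vertices. -/
def ThreeConnected (G : FinGraph) : Prop :=
  3 < G.verts.card ∧ ∀ S : Finset ℕ, S.card < 3 → ConnectedOff G S

/-!
Splitting off a node (a vertex of degree three) `v` by an edge between two of its neighbours can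
only fail because of a critical set that contains these two neighbours but neither `v` nor its third
neighbour. Suppose every splitting fails. A maximal critical set `W` with at least three vertices
that misses some non-node has at most one edge to each node outside it, and some node lies outside
it by 3-connectivity. The nodes outside `W` span a forest; let `t` be a leaf of it. As `t` has at
most one neighbour in `W` and at most one in the forest, it has a neighbour that is not a node. If
it has two such neighbours, the critical sets obstructing the splittings at `t` contain two that
cross in at least two vertices, so that their union together with `t` is everything; this
contradicts maximality or the absence of edges between their differences. If it has only one, the
set obstructing the splitting between the other two either is a single edge or meets `W` in two
vertices and hence lies in `W`; both would put all neighbours of `t` but one into `W`.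
-/

namespace FinGraph

variable {G : FinGraph} {u v p q t : ℕ} {A B X Y : Finset ℕ} {e : Sym2 ℕ}

/-- The neighbourhood of `v` in `G`. The number of neighbours of `v` inside a set `X` is written
`#(G.neighbors v ∩ X)`. -/
def neighbors (G : FinGraph) (v : ℕ) : Finset ℕ := {u ∈ G.verts | s(v, u) ∈ G.edges}

/-- A node of `G` is a vertex of degree three, the kind of vertex the reduction deletes. -/
def IsNode (G : FinGraph) (v : ℕ) : Prop := #(G.neighbors v) = 3

instance : DecidablePred G.IsNode := fun _ ↦ inferInstanceAs (Decidable (_ = _))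

/-- The edges of `G` induced by the vertex set `X`. -/
def edgesIn (G : FinGraph) (X : Finset ℕ) : Finset (Sym2 ℕ) := G.edges ∩ X.sym2

lemma adj_comm : G.Adj u v ↔ G.Adj v u := by
  rw [Adj, Adj, Sym2.eq_swap]

lemma Adj.ne (h : G.Adj u v) : u ≠ v := fun huv ↦ G.not_isDiag _ h (Sym2.mk_isDiag_iff.2 huv)

lemma Adj.mem_verts_left (h : G.Adj u v) : u ∈ G.verts := G.mem_verts _ h u (Sym2.mem_mk_left u v)

lemma Adj.mem_verts_right (h : G.Adj u v) : v ∈ G.verts :=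
  G.mem_verts _ h v (Sym2.mem_mk_right u v)

lemma mem_neighbors : u ∈ G.neighbors v ↔ G.Adj v u := by
  rw [neighbors, mem_filter]
  exact ⟨And.right, fun h ↦ ⟨Adj.mem_verts_right h, h⟩⟩

lemma neighbors_subset_verts : G.neighbors v ⊆ G.verts := filter_subset _ _

lemma self_notMem_neighbors : v ∉ G.neighbors v := fun h ↦ (mem_neighbors.1 h).ne rfl

lemma IsNode.mem_verts (h : G.IsNode v) : v ∈ G.verts := by
  obtain ⟨u, hu⟩ : (G.neighbors v).Nonempty := card_pos.1 (by rw [h]; norm_num)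
  exact (mem_neighbors.1 hu).mem_verts_left

lemma mem_edgesIn : e ∈ G.edgesIn X ↔ e ∈ G.edges ∧ ∀ u ∈ e, u ∈ X := by
  rw [edgesIn, mem_inter, mem_sym2_iff]

lemma mk_mem_edgesIn : s(u, v) ∈ G.edgesIn X ↔ G.Adj u v ∧ u ∈ X ∧ v ∈ X := by
  rw [edgesIn, mem_inter, mk_mem_sym2_iff, Adj]

lemma edgesIn_mono (h : X ⊆ Y) : G.edgesIn X ⊆ G.edgesIn Y :=
  inter_subset_inter_left (sym2_mono h)

lemma edgesIn_verts : G.edgesIn G.verts = G.edges :=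
  inter_eq_left.2 fun e he ↦ mem_sym2_iff.2 (G.mem_verts e he)

lemma edgesIn_inter : G.edgesIn (A ∩ B) = G.edgesIn A ∩ G.edgesIn B := by
  ext e
  simp only [mem_edgesIn, mem_inter]
  grind

lemma edgesIn_erase_verts : G.edgesIn (G.verts.erase v) = {e ∈ G.edges | v ∉ e} := by
  ext e
  simp only [mem_edgesIn, mem_filter, mem_erase]
  have := G.mem_verts e
  grind

lemma edgesIn_eq_empty_of_card_le_one (h : #X ≤ 1) : G.edgesIn X = ∅ := by
  refine eq_empty_of_forall_notMem fun e ↦ ?_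
  induction e using Sym2.ind with
  | _ u v =>
    rw [mk_mem_edgesIn]
    exact fun ⟨huv, hu, hv⟩ ↦ huv.ne (card_le_one.1 h u hu v hv)

lemma edgesIn_union_edgesIn_subset : G.edgesIn A ∪ G.edgesIn B ⊆ G.edgesIn (A ∪ B) :=
  union_subset (edgesIn_mono subset_union_left) (edgesIn_mono subset_union_right)

lemma card_edgesIn_add_card_edgesIn_le (A B : Finset ℕ) :
    #(G.edgesIn A) + #(G.edgesIn B) ≤ #(G.edgesIn (A ∩ B)) + #(G.edgesIn (A ∪ B)) := by
  rw [edgesIn_inter, ← card_union_add_card_inter, add_comm]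
  exact Nat.add_le_add_left (card_le_card edgesIn_union_edgesIn_subset) _

lemma card_edgesIn_add_card_edgesIn_lt (hp : p ∈ A \ B) (hq : q ∈ B \ A) (hpq : G.Adj p q) :
    #(G.edgesIn A) + #(G.edgesIn B) < #(G.edgesIn (A ∩ B)) + #(G.edgesIn (A ∪ B)) := by
  rw [mem_sdiff] at hp hq
  have hmem : s(p, q) ∈ G.edgesIn (A ∪ B) :=
    mk_mem_edgesIn.2 ⟨hpq, mem_union_left B hp.1, mem_union_right A hq.1⟩
  have hnot : s(p, q) ∉ G.edgesIn A ∪ G.edgesIn B := by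
    simp only [mem_union, mk_mem_edgesIn, hp.2, hq.2, and_false, false_and, or_self,
      not_false_eq_true]
  have hlt := card_lt_card
    ((ssubset_iff_of_subset edgesIn_union_edgesIn_subset).2 ⟨_, hmem, hnot⟩)
  rw [edgesIn_inter, ← card_union_add_card_inter, add_comm]
  exact Nat.add_lt_add_left hlt _

lemma card_edgesIn_insert (ht : t ∉ X) :
    #(G.edgesIn (insert t X)) = #(G.edgesIn X) + #(G.neighbors t ∩ X) := by
  have hsplit : G.edgesIn (insert t X) =
      G.edgesIn X ∪ (G.neighbors t ∩ X).image fun u ↦ s(t, u) := by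
    ext e
    induction e using Sym2.ind with
    | _ p q =>
      have hloop : ¬ G.Adj t t := fun h ↦ h.ne rfl
      have hcomm : G.Adj p q ↔ G.Adj q p := adj_comm
      simp only [mk_mem_edgesIn, mem_union, mem_image, mem_inter, mem_neighbors, mem_insert,
        Sym2.eq_iff]
      grind
  have hdisj : Disjoint (G.edgesIn X) ((G.neighbors t ∩ X).image fun u ↦ s(t, u)) := by
    rw [disjoint_right]
    intro e he
    obtain ⟨u, -, rfl⟩ := mem_image.1 he
    exact fun h ↦ ht (mk_mem_edgesIn.1 h).2.1
  rw [hsplit, card_union_of_disjoint hdisj,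
    card_image_of_injective _ fun _ _ ↦ Sym2.congr_right.1]

lemma card_edgesIn_erase (ht : t ∈ X) :
    #(G.edgesIn X) = #(G.edgesIn (X.erase t)) + #(G.neighbors t ∩ X) := by
  have h := card_edgesIn_insert (G := G) (notMem_erase t X)
  rwa [insert_erase ht, inter_erase, erase_eq_of_notMem
    (fun h ↦ self_notMem_neighbors (mem_inter.1 h).1)] at h

lemma card_edgesIn_union (h : Disjoint A B) :
    #(G.edgesIn (A ∪ B)) = #(G.edgesIn A) + #(G.edgesIn B) + ∑ b ∈ B, #(G.neighbors b ∩ A) := by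
  induction B using Finset.induction_on with
  | empty => simp [edgesIn]
  | insert t B ht ih =>
    rw [disjoint_insert_right] at h
    have htAB : t ∉ A ∪ B := fun htAB ↦ (mem_union.1 htAB).elim h.1 ht
    rw [union_insert, card_edgesIn_insert htAB, ih h.2, card_edgesIn_insert ht, sum_insert ht,
      inter_union_distrib_left, card_union_of_disjoint (h.2.mono inter_subset_right
        inter_subset_right)]
    ring

lemma sum_card_neighbors_inter (X : Finset ℕ) :
    ∑ x ∈ X, #(G.neighbors x ∩ X) = 2 * #(G.edgesIn X) := by
  induction X using Finset.induction_on with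
  | empty => simp [edgesIn]
  | insert t X ht ih =>
    have hself : #(G.neighbors t ∩ insert t X) = #(G.neighbors t ∩ X) := by
      rw [inter_insert_of_notMem self_notMem_neighbors]
    have hother : ∀ x ∈ X, #(G.neighbors x ∩ insert t X) =
        #(G.neighbors x ∩ X) + if x ∈ G.neighbors t then 1 else 0 := fun x _ ↦ by
      have hcomm : t ∈ G.neighbors x ↔ x ∈ G.neighbors t := by
        rw [mem_neighbors, mem_neighbors, adj_comm]
      split_ifs with hx
      · rw [inter_insert_of_mem (hcomm.2 hx),
          card_insert_of_notMem fun h ↦ ht (mem_inter.1 h).2]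
      · rw [inter_insert_of_notMem (mt hcomm.1 hx), add_zero]
    rw [sum_insert ht, hself, sum_congr rfl hother, sum_add_distrib, ih, ← card_filter,
      filter_mem_eq_inter, inter_comm X, card_edgesIn_insert ht]
    ring

lemma sum_card_neighbors_add_card_edgesIn_sdiff (hX : X ⊆ G.verts) :
    ∑ x ∈ X, #(G.neighbors x) + #(G.edgesIn (G.verts \ X)) = #G.edges + #(G.edgesIn X) := by
  have hsplit : ∀ x ∈ X, #(G.neighbors x) =
      #(G.neighbors x ∩ X) + #(G.neighbors x ∩ (G.verts \ X)) := fun x _ ↦ by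
    rw [← card_union_of_disjoint (disjoint_sdiff.mono inter_subset_right inter_subset_right),
      ← inter_union_distrib_left, union_sdiff_of_subset hX,
      inter_eq_left.2 neighbors_subset_verts]
  have hedges := card_edgesIn_union (G := G) (disjoint_sdiff (s := X) (t := G.verts)).symm
  rw [sdiff_union_of_subset hX, edgesIn_verts] at hedges
  rw [sum_congr rfl hsplit, sum_add_distrib, sum_card_neighbors_inter, hedges]
  ring

end FinGraph

/-! ### Sparsity and connectivity -/

open FinGraph

lemma ThreeConnected.exists_adj_of_card_lt_three {G : FinGraph} (h3 : ThreeConnected G)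
    {S A : Finset ℕ} (hS : #S < 3) {x y : ℕ} (hx : x ∈ G.verts) (hxA : x ∈ A \ S)
    (hy : y ∈ G.verts) (hyA : y ∉ A ∪ S) : ∃ p ∈ A \ S, ∃ q ∉ A ∪ S, G.Adj p q := by
  by_contra! hclosed
  rw [mem_sdiff] at hxA
  rw [notMem_union] at hyA
  have hreach : ∀ z, Relation.ReflTransGen (fun u v ↦ G.Adj u v ∧ u ∉ S ∧ v ∉ S) x z → z ∈ A := by
    intro z hz
    induction hz with
    | refl => exact hxA.1
    | @tail p q _ hpq hp =>
      by_contra hq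
      exact hclosed p (mem_sdiff.2 ⟨hp, hpq.2.1⟩) q (notMem_union.2 ⟨hq, hpq.2.2⟩) hpq.1
  exact hyA.1 (hreach y (h3.2 S hS x hx hxA.2 y hy hyA.2))

namespace Circuit23

variable {G : FinGraph} {X F : Finset ℕ} {v u w : ℕ}

lemma card_edges_add_two (hG : Circuit23 G) : #G.edges + 2 = 2 * #G.verts := by
  have := hG.1
  omega

lemma card_edgesIn_add_three_le (hG : Circuit23 G) (hX : X ⊂ G.verts) (h2 : 2 ≤ #X) :
    #(G.edgesIn X) + 3 ≤ 2 * #X := by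
  rcases (G.edgesIn X).eq_empty_or_nonempty with hempty | hne
  · rw [hempty, card_empty]
    omega
  · have := hG.2 X (G.edgesIn X) ⟨hX.subset, inter_subset_left, fun e he ↦ (mem_edgesIn.1 he).2⟩
      (Or.inl hX.ne) hne
    omega

lemma three_le_card_neighbors (hG : Circuit23 G) (hV : 3 ≤ #G.verts) (hv : v ∈ G.verts) :
    3 ≤ #(G.neighbors v) := by
  have hcard := card_erase_of_mem hv
  have hsparse := hG.card_edgesIn_add_three_le (erase_ssubset hv) (by omega)
  have hdeg := G.card_edgesIn_erase hv
  have hedges := hG.card_edges_add_two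
  rw [edgesIn_verts, inter_eq_left.2 neighbors_subset_verts] at hdeg
  omega

/- Otherwise the nodes of `F` would span at least `#F` edges, so deleting them would remove at most
`2 * #F` edges and leave too dense a graph. -/
lemma exists_card_neighbors_inter_le_one (hG : Circuit23 G) (hF : F.Nonempty)
    (hnode : ∀ v ∈ F, G.IsNode v) (hcard : #F + 2 ≤ #G.verts) :
    ∃ v ∈ F, #(G.neighbors v ∩ F) ≤ 1 := by
  by_contra! hdeg
  have hFV : F ⊆ G.verts := fun v hv ↦ (hnode v hv).mem_verts
  have hsum := sum_card_neighbors_add_card_edgesIn_sdiff hFV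
  rw [sum_const_nat hnode] at hsum
  have hdense : #F * 2 ≤ 2 * #(G.edgesIn F) :=
    (card_nsmul_le_sum F _ 2 hdeg).trans_eq (sum_card_neighbors_inter F)
  have hrest := card_sdiff_add_card_eq_card hFV
  have hsparse := hG.card_edgesIn_add_three_le (sdiff_ssubset hFV hF) (by omega)
  have hedges := hG.card_edges_add_two
  omega

lemma not_adj_of_isNode_triangle (hG : Circuit23 G) (hV : 5 ≤ #G.verts) (hu : G.IsNode u)
    (hv : G.IsNode v) (hw : G.IsNode w) (huv : G.Adj u v) (huw : G.Adj u w) : ¬ G.Adj v w := by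
  intro hvw
  have hcard : #({u, v, w} : Finset ℕ) ≤ 3 := card_le_three
  obtain ⟨x, hx, hdeg⟩ := hG.exists_card_neighbors_inter_le_one (F := {u, v, w})
    (insert_nonempty _ _) (by simp [hu, hv, hw]) (by omega)
  have two_nbrs : ∀ {x y z}, G.Adj x y → G.Adj x z → y ≠ z → y ∈ ({u, v, w} : Finset ℕ) →
      z ∈ ({u, v, w} : Finset ℕ) → 1 < #(G.neighbors x ∩ {u, v, w}) :=
    fun hxy hxz hyz hy hz ↦ one_lt_card.2 ⟨_, mem_inter.2 ⟨mem_neighbors.2 hxy, hy⟩, _,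
      mem_inter.2 ⟨mem_neighbors.2 hxz, hz⟩, hyz⟩
  refine hdeg.not_gt ?_
  simp only [mem_insert, mem_singleton] at hx
  rcases hx with rfl | rfl | rfl
  · exact two_nbrs huv huw hvw.ne (by simp) (by simp)
  · exact two_nbrs (adj_comm.1 huv) hvw huw.ne (by simp) (by simp)
  · exact two_nbrs (adj_comm.1 huw) (adj_comm.1 hvw) huv.ne (by simp) (by simp)

end Circuit23

/-! ### Critical sets -/

namespace FinGraph

variable {G : FinGraph} {A B X : Finset ℕ} {v t p q : ℕ}

/-- A critical set: a proper vertex subset with at least two elements for which the sparsity bound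
is attained. -/
structure IsCritical (G : FinGraph) (X : Finset ℕ) : Prop where
  ssubset_verts : X ⊂ G.verts
  two_le_card : 2 ≤ #X
  card_edgesIn : #(G.edgesIn X) + 3 = 2 * #X

namespace IsCritical

lemma union (hG : Circuit23 G) (hA : G.IsCritical A) (hB : G.IsCritical B) (hAB : 2 ≤ #(A ∩ B))
    (hU : A ∪ B ⊂ G.verts) : G.IsCritical (A ∪ B) := by
  have hU2 := hA.two_le_card.trans (card_le_card (subset_union_left (s₂ := B)))
  have hsuper := card_edgesIn_add_card_edgesIn_le (G := G) A B
  have hinter := hG.card_edgesIn_add_three_le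
    (inter_subset_left.trans_ssubset hA.ssubset_verts) hAB
  have hunion := hG.card_edgesIn_add_three_le hU hU2
  have hcard := card_union_add_card_inter A B
  exact ⟨hU, hU2, by linarith [hA.card_edgesIn, hB.card_edgesIn]⟩

lemma not_adj_of_mem_sdiff (hG : Circuit23 G) (hA : G.IsCritical A) (hB : G.IsCritical B)
    (hAB : 2 ≤ #(A ∩ B)) (hU : A ∪ B ⊂ G.verts) (hp : p ∈ A \ B) (hq : q ∈ B \ A) :
    ¬ G.Adj p q := by
  intro hpq
  have hU2 := hA.two_le_card.trans (card_le_card (subset_union_left (s₂ := B)))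
  have hsuper := card_edgesIn_add_card_edgesIn_lt hp hq hpq
  have hinter := hG.card_edgesIn_add_three_le
    (inter_subset_left.trans_ssubset hA.ssubset_verts) hAB
  have hunion := hG.card_edgesIn_add_three_le hU hU2
  have hcard := card_union_add_card_inter A B
  linarith [hA.card_edgesIn, hB.card_edgesIn]

lemma insert_eq_verts (hG : Circuit23 G) (hX : G.IsCritical X) (ht : t ∈ G.verts) (htX : t ∉ X)
    (h3 : 3 ≤ #(G.neighbors t ∩ X)) : insert t X = G.verts := by
  by_contra hne
  have hsub := (insert_subset ht hX.ssubset_verts.subset).ssubset_of_ne hne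
  have hcard := card_insert_of_notMem htX
  have hsparse := hG.card_edgesIn_add_three_le hsub (by linarith [hX.two_le_card])
  linarith [hX.card_edgesIn, card_edgesIn_insert (G := G) htX]

lemma insert (hX : G.IsCritical X) (htX : t ∉ X) (h2 : #(G.neighbors t ∩ X) = 2)
    (hne : insert t X ⊂ G.verts) : G.IsCritical (insert t X) := by
  have hcard := card_insert_of_notMem htX
  exact ⟨hne, by linarith [hX.two_le_card],
    by linarith [hX.card_edgesIn, card_edgesIn_insert (G := G) htX]⟩

lemma two_le_card_neighbors_inter (hG : Circuit23 G) (hX : G.IsCritical X) (h3 : 3 ≤ #X)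
    (ht : t ∈ X) : 2 ≤ #(G.neighbors t ∩ X) := by
  have hcard := card_erase_of_mem ht
  have hsparse := hG.card_edgesIn_add_three_le
    ((erase_subset t X).trans_ssubset hX.ssubset_verts) (by omega)
  have hdeg := G.card_edgesIn_erase ht
  have htight := hX.card_edgesIn
  omega

lemma neighbors_erase_subset (hG : Circuit23 G) (hX : G.IsCritical X) (h3 : 3 ≤ #X)
    (hvX : v ∈ X) (hv : G.IsNode v) (htv : G.Adj v t) (htX : t ∉ X) :
    (G.neighbors v).erase t ⊆ X := by
  have hsub : G.neighbors v ∩ X ⊆ (G.neighbors v).erase t := by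
    rw [subset_erase]
    exact ⟨inter_subset_left, fun h ↦ htX (mem_inter.1 h).2⟩
  have hcard : #((G.neighbors v).erase t) ≤ #(G.neighbors v ∩ X) := by
    rw [card_erase_of_mem (mem_neighbors.2 htv), hv]
    exact hX.two_le_card_neighbors_inter hG h3 hvX
  exact (eq_of_subset_of_card_le hsub hcard) ▸ inter_subset_right

lemma adj_of_card_le_two (hX : G.IsCritical X) (hp : p ∈ X) (hq : q ∈ X) (hpq : p ≠ q)
    (h2 : #X ≤ 2) : G.Adj p q := by
  by_contra hnadj
  have hX2 := hX.two_le_card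
  have hpair : {p, q} = X := eq_of_subset_of_card_le (by simp [insert_subset_iff, hp, hq])
    (by rwa [card_pair hpq])
  have hsingle := card_edgesIn_insert (G := G) (notMem_singleton.2 hpq)
  rw [hpair, inter_singleton_of_notMem (mt mem_neighbors.1 hnadj),
    edgesIn_eq_empty_of_card_le_one (card_singleton q).le] at hsingle
  have htight := hX.card_edgesIn
  simp only [card_empty] at hsingle
  omega

end IsCritical

end FinGraph

/-! ### Blocking sets -/

lemma card_biUnion_add_card_le_sum_card {α : Type*} [DecidableEq α] {N : Finset α}
    {X : α → Finset α} (hX : ∀ c ∈ N, 2 ≤ #(N ∩ X c)) :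
    #(N.biUnion X) + #N ≤ ∑ c ∈ N, #(X c) := by
  have hunion : #(N.biUnion X) ≤ #N + #(N.biUnion fun c ↦ X c \ N) := by
    refine (card_le_card fun u hu ↦ ?_).trans (card_union_le _ _)
    simp only [mem_union, mem_biUnion, mem_sdiff] at hu ⊢
    by_cases huN : u ∈ N
    · exact Or.inl huN
    · exact Or.inr (hu.imp fun c hc ↦ ⟨hc.1, hc.2, huN⟩)
  have houter : #(N.biUnion fun c ↦ X c \ N) ≤ ∑ c ∈ N, #(X c \ N) := card_biUnion_le
  have hinner : #N * 2 ≤ ∑ c ∈ N, #(N ∩ X c) := card_nsmul_le_sum N _ 2 hX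
  have hsplit : ∑ c ∈ N, #(X c) = ∑ c ∈ N, #(X c \ N) + ∑ c ∈ N, #(N ∩ X c) := by
    rw [← sum_add_distrib]
    exact sum_congr rfl fun c _ ↦ by rw [inter_comm, card_sdiff_add_card_inter]
  omega

namespace FinGraph

variable {G : FinGraph} {A B X : Finset ℕ} {a b c t u : ℕ}

/-- `X` blocks the pair of neighbours other than `c` of a node `v`: it is a critical set missing `v`
and containing every neighbour of `v` except `c`. Adding the edge between these two neighbours to
`G - v` would overload `X`. -/
structure IsBlocking (G : FinGraph) (X : Finset ℕ) (v c : ℕ) : Prop extends G.IsCritical X where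
  notMem : v ∉ X
  neighbors_sdiff : G.neighbors v \ X = {c}

/-- Every way of splitting off a node is obstructed by a critical set. -/
def IsFullyBlocked (G : FinGraph) : Prop :=
  ∀ v, G.IsNode v → ∀ c ∈ G.neighbors v, ∃ X, G.IsBlocking X v c

namespace IsBlocking

lemma mem_neighbors (h : G.IsBlocking X t c) : c ∈ G.neighbors t :=
  (mem_sdiff.1 (h.neighbors_sdiff ▸ mem_singleton_self c)).1

lemma notMem_of_blocked (h : G.IsBlocking X t c) : c ∉ X :=
  (mem_sdiff.1 (h.neighbors_sdiff ▸ mem_singleton_self c)).2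

lemma mem_of_ne (h : G.IsBlocking X t c) (hu : u ∈ G.neighbors t) (huc : u ≠ c) : u ∈ X := by
  by_contra huX
  exact huc (mem_singleton.1 (h.neighbors_sdiff ▸ mem_sdiff.2 ⟨hu, huX⟩))

lemma card_neighbors_inter (h : G.IsBlocking X t c) (ht : G.IsNode t) :
    #(G.neighbors t ∩ X) = 2 := by
  have := card_sdiff_add_card_inter (G.neighbors t) X
  rw [h.neighbors_sdiff, card_singleton, ht] at this
  omega

lemma neighbors_subset_union (hA : G.IsBlocking A t a) (hB : G.IsBlocking B t b) (hab : a ≠ b) :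
    G.neighbors t ⊆ A ∪ B := by
  intro u hu
  rw [mem_union]
  rcases eq_or_ne u a with rfl | hua
  · exact Or.inr (hB.mem_of_ne hu hab)
  · exact Or.inl (hA.mem_of_ne hu hua)

end IsBlocking

section Triple

variable {X : ℕ → Finset ℕ}

lemma notMem_biUnion_neighbors (hX : ∀ c ∈ G.neighbors t, G.IsBlocking (X c) t c) :
    t ∉ (G.neighbors t).biUnion X := fun h ↦ by
  obtain ⟨c, hc, htc⟩ := mem_biUnion.1 h
  exact (hX c hc).notMem htc

/- The sparsity bound for the union of the three sets leaves no room for a vertex shared beyond the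
forced ones, nor for an edge joining two of the sets. -/
lemma card_biUnion_neighbors_and_edgesIn_eq (hG : Circuit23 G) (ht : G.IsNode t)
    (hX : ∀ c ∈ G.neighbors t, G.IsBlocking (X c) t c)
    (hsmall : (G.neighbors t : Set ℕ).Pairwise fun a b ↦ #(X a ∩ X b) ≤ 1) :
    #((G.neighbors t).biUnion X) + 3 = ∑ c ∈ G.neighbors t, #(X c) ∧
      G.IsCritical ((G.neighbors t).biUnion X) ∧
      G.edgesIn ((G.neighbors t).biUnion X) =
        (G.neighbors t).biUnion fun c ↦ G.edgesIn (X c) := by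
  set N := G.neighbors t
  set U := N.biUnion X
  have hNcard : #N = 3 := ht
  have hcard : #U + #N ≤ ∑ c ∈ N, #(X c) :=
    card_biUnion_add_card_le_sum_card fun c hc ↦ ((hX c hc).card_neighbors_inter ht).ge
  have hUV : U ⊂ G.verts := (ssubset_iff_of_subset
    (biUnion_subset.2 fun c hc ↦ (hX c hc).ssubset_verts.subset)).2
    ⟨t, ht.mem_verts, notMem_biUnion_neighbors hX⟩
  have hU2 : 2 ≤ #U := by
    obtain ⟨c, hc⟩ : N.Nonempty := card_pos.1 (by omega)
    exact (hX c hc).two_le_card.trans (card_le_card (subset_biUnion_of_mem X hc))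
  have hsparse := hG.card_edgesIn_add_three_le hUV hU2
  have hedges : #(N.biUnion fun c ↦ G.edgesIn (X c)) = ∑ c ∈ N, #(G.edgesIn (X c)) :=
    card_biUnion fun a ha b hb hab ↦ by
      refine disjoint_iff_inter_eq_empty.2 (edgesIn_inter.symm.trans ?_)
      exact edgesIn_eq_empty_of_card_le_one (hsmall ha hb hab)
  have htight : ∑ c ∈ N, #(G.edgesIn (X c)) + 9 = 2 * ∑ c ∈ N, #(X c) := by
    rw [mul_sum, ← sum_congr rfl fun c hc ↦ (hX c hc).card_edgesIn, sum_add_distrib, sum_const,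
      hNcard, smul_eq_mul]
  have hsub : (N.biUnion fun c ↦ G.edgesIn (X c)) ⊆ G.edgesIn U :=
    biUnion_subset.2 fun c hc ↦ edgesIn_mono (subset_biUnion_of_mem X hc)
  have hle := card_le_card hsub
  exact ⟨by omega, ⟨hUV, hU2, by omega⟩, (eq_of_subset_of_card_le hsub (by omega)).symm⟩

/- With at least three vertices, `X a` would be cut off by the two neighbours of `t` it contains. -/
lemma card_le_two_of_edgesIn_eq_biUnion (h3 : ThreeConnected G) (ht : G.IsNode t)
    (hX : ∀ c ∈ G.neighbors t, G.IsBlocking (X c) t c)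
    (hsmall : (G.neighbors t : Set ℕ).Pairwise fun a b ↦ #(X a ∩ X b) ≤ 1)
    (hcover : insert t ((G.neighbors t).biUnion X) = G.verts)
    (hedges : G.edgesIn ((G.neighbors t).biUnion X) =
      (G.neighbors t).biUnion fun c ↦ G.edgesIn (X c))
    (ha : a ∈ G.neighbors t) : #(X a) ≤ 2 := by
  set N := G.neighbors t
  have hNcard : #N = 3 := ht
  have hScard : #(N.erase a) = 2 := by rw [card_erase_of_mem ha, hNcard]
  by_contra! hlarge
  obtain ⟨x, hx, hxS⟩ := exists_mem_notMem_of_card_lt_card (hScard.trans_lt hlarge)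
  obtain ⟨p, hp, q, hq, hpq⟩ := h3.exists_adj_of_card_lt_three (A := X a) (by omega)
    ((hX a ha).ssubset_verts.subset hx) (mem_sdiff.2 ⟨hx, hxS⟩) (neighbors_subset_verts ha)
    (notMem_union.2 ⟨(hX a ha).notMem_of_blocked, notMem_erase a N⟩)
  obtain ⟨hpX, hpS⟩ := mem_sdiff.1 hp
  have hqX : q ∉ X a := (notMem_union.1 hq).1
  have hpt : p ≠ t := fun h ↦ (hX a ha).notMem (h ▸ hpX)
  have hqt : q ≠ t := fun h ↦ hpS <| mem_erase.2
    ⟨fun hpa ↦ (hX a ha).notMem_of_blocked (hpa ▸ hpX), mem_neighbors.2 (adj_comm.1 (h ▸ hpq))⟩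
  have mem_cover : ∀ {u}, u ∈ G.verts → u ≠ t → u ∈ N.biUnion X := fun hu hut ↦
    mem_of_mem_insert_of_ne (hcover ▸ hu) hut
  have hpqU : s(p, q) ∈ G.edgesIn (N.biUnion X) := mk_mem_edgesIn.2
    ⟨hpq, mem_cover hpq.mem_verts_left hpt, mem_cover hpq.mem_verts_right hqt⟩
  rw [hedges] at hpqU
  obtain ⟨d, hd, hpqd⟩ := mem_biUnion.1 hpqU
  obtain ⟨-, hpd, hqd⟩ := mk_mem_edgesIn.1 hpqd
  have had : a ≠ d := fun h ↦ hqX (h ▸ hqd)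
  obtain ⟨c, hc, hcad⟩ : ∃ c ∈ N, c ∉ ({a, d} : Finset ℕ) :=
    exists_mem_notMem_of_card_lt_card (by rw [card_pair had]; omega)
  simp only [mem_insert, mem_singleton, not_or] at hcad
  have hpc : p = c := card_le_one.1 (hsmall ha hd had) p (mem_inter.2 ⟨hpX, hpd⟩) c
    (mem_inter.2 ⟨(hX a ha).mem_of_ne hc hcad.1, (hX d hd).mem_of_ne hc hcad.2⟩)
  exact hpS (hpc ▸ mem_erase.2 ⟨hcad.1, hc⟩)

lemma exists_two_le_card_inter (h3 : ThreeConnected G) (hG : Circuit23 G) (hV : 5 ≤ #G.verts)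
    (ht : G.IsNode t) (hX : ∀ c ∈ G.neighbors t, G.IsBlocking (X c) t c) :
    ∃ a ∈ G.neighbors t, ∃ b ∈ G.neighbors t, a ≠ b ∧ 2 ≤ #(X a ∩ X b) := by
  by_contra! hcon
  have hsmall : (G.neighbors t : Set ℕ).Pairwise fun a b ↦ #(X a ∩ X b) ≤ 1 :=
    fun a ha b hb hab ↦ Nat.le_of_lt_succ (hcon a ha b hb hab)
  obtain ⟨hcard, hcrit, hedges⟩ := card_biUnion_neighbors_and_edgesIn_eq hG ht hX hsmall
  have htU := notMem_biUnion_neighbors hX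
  have hNU : G.neighbors t ⊆ (G.neighbors t).biUnion X := fun u hu ↦ by
    obtain ⟨c, hc, hcu⟩ := exists_mem_ne (by rw [ht]; norm_num) u
    exact mem_biUnion.2 ⟨c, hc, (hX c hc).mem_of_ne hu hcu.symm⟩
  have hcover : insert t ((G.neighbors t).biUnion X) = G.verts :=
    hcrit.insert_eq_verts hG ht.mem_verts htU (by rw [inter_eq_left.2 hNU, ht])
  have hUcard := card_insert_of_notMem htU
  have hbound : ∑ c ∈ G.neighbors t, #(X c) ≤ #(G.neighbors t) * 2 := sum_le_card_nsmul _ _ 2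
    fun a ha ↦ card_le_two_of_edgesIn_eq_biUnion h3 ht hX hsmall hcover hedges ha
  rw [hcover] at hUcard
  rw [ht] at hbound
  omega

end Triple

end FinGraph

/-! ### Crossing pairs and maximal candidates -/

lemma ThreeConnected.neighbors_erase_ne {G : FinGraph} (h3 : ThreeConnected G)
    (hV : 5 ≤ #G.verts) {t c : ℕ} (ht : G.IsNode t) (htc : G.Adj t c) :
    (G.neighbors t).erase c ≠ (G.neighbors c).erase t := by
  intro heq
  have hS : #((G.neighbors t).erase c) = 2 := by
    rw [card_erase_of_mem (mem_neighbors.2 htc), ht]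
  have hcard : #({t, c} ∪ (G.neighbors t).erase c) < #G.verts := by
    have := card_union_le {t, c} ((G.neighbors t).erase c)
    rw [card_pair htc.ne] at this
    omega
  obtain ⟨y, hyV, hy⟩ := exists_mem_notMem_of_card_lt_card hcard
  have htS : t ∉ (G.neighbors t).erase c := fun h ↦ self_notMem_neighbors (mem_of_mem_erase h)
  obtain ⟨p, hp, q, hq, hpq⟩ := h3.exists_adj_of_card_lt_three (by omega) htc.mem_verts_left
    (mem_sdiff.2 ⟨mem_insert_self t {c}, htS⟩) hyV hy
  simp only [mem_sdiff, mem_insert, mem_singleton] at hp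
  simp only [mem_union, mem_insert, mem_singleton, not_or] at hq
  rcases hp.1 with rfl | rfl
  · exact hq.2 (mem_erase.2 ⟨hq.1.2, mem_neighbors.2 hpq⟩)
  · exact hq.2 (heq ▸ mem_erase.2 ⟨hq.1.1, mem_neighbors.2 hpq⟩)

namespace FinGraph

variable {G : FinGraph} {A B W X : Finset ℕ} {a b c t w z : ℕ}

/-- Critical sets `A` and `B` blocking the neighbours `a` and `b` of a node `t`, neither of which is
a node, and meeting in at least two vertices. -/
structure IsCrossingPair (G : FinGraph) (t a b : ℕ) (A B : Finset ℕ) : Prop where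
  isNode : G.IsNode t
  ne : a ≠ b
  not_isNode_left : ¬ G.IsNode a
  not_isNode_right : ¬ G.IsNode b
  left : G.IsBlocking A t a
  right : G.IsBlocking B t b
  two_le_card_inter : 2 ≤ #(A ∩ B)

namespace IsBlocking

lemma two_le_card_inter (hG : Circuit23 G) (hA : G.IsBlocking A t a) (hB : G.IsBlocking B t b)
    (hab : a ≠ b) (hc : G.IsNode c) (hct : c ∈ G.neighbors t) (hca : c ≠ a) (hcb : c ≠ b)
    (hA3 : 3 ≤ #A) : 2 ≤ #(A ∩ B) := by
  have htc : G.Adj c t := adj_comm.1 (FinGraph.mem_neighbors.1 hct)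
  have hcA : c ∈ A := hA.mem_of_ne hct hca
  have hcB : c ∈ B := hB.mem_of_ne hct hcb
  have hNA := hA.neighbors_erase_subset hG hA3 hcA hc htc hA.notMem
  have hB3 : 3 ≤ #B := by
    by_contra! hB2
    have haB : a ∈ B := hB.mem_of_ne hA.mem_neighbors hab
    have hac := hB.adj_of_card_le_two hcB haB hca (by omega)
    have hat : a ≠ t := fun h ↦ hB.notMem (h ▸ haB)
    exact hA.notMem_of_blocked (hNA (mem_erase.2 ⟨hat, FinGraph.mem_neighbors.2 hac⟩))
  have hNB := hB.neighbors_erase_subset hG hB3 hcB hc htc hB.notMem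
  have hcard := card_le_card (subset_inter hNA hNB)
  rwa [card_erase_of_mem (FinGraph.mem_neighbors.2 htc), hc] at hcard

lemma neighbors_erase_subset_of_card_le_two (hA : G.IsBlocking A t a) (hB : G.IsBlocking B t b)
    (hab : a ≠ b) (hct : c ∈ G.neighbors t) (hca : c ≠ a) (hcb : c ≠ b) (hA2 : #A ≤ 2)
    (hB2 : #B ≤ 2) : (G.neighbors t).erase c ⊆ (G.neighbors c).erase t := by
  intro u hu
  obtain ⟨huc, hut⟩ := mem_erase.1 hu
  refine mem_erase.2 ⟨(Adj.ne (FinGraph.mem_neighbors.1 hut)).symm, FinGraph.mem_neighbors.2 ?_⟩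
  rcases eq_or_ne u a with rfl | hua
  · exact hB.adj_of_card_le_two (hB.mem_of_ne hct hcb) (hB.mem_of_ne hut hab) huc.symm hB2
  · exact hA.adj_of_card_le_two (hA.mem_of_ne hct hca) (hA.mem_of_ne hut hua) huc.symm hA2

end IsBlocking

lemma exists_isCrossingPair (h3 : ThreeConnected G) (hG : Circuit23 G) (hV : 5 ≤ #G.verts)
    (H : G.IsFullyBlocked) (ht : G.IsNode t) (ha : a ∈ G.neighbors t) (hb : b ∈ G.neighbors t)
    (hab : a ≠ b) (hanode : ¬ G.IsNode a) (hbnode : ¬ G.IsNode b) :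
    ∃ a b A B, G.IsCrossingPair t a b A B := by
  choose! X hX using H t ht
  by_cases hall : ∀ c ∈ G.neighbors t, ¬ G.IsNode c
  · obtain ⟨a, ha, b, hb, hab, hinter⟩ := exists_two_le_card_inter h3 hG hV ht hX
    exact ⟨a, b, X a, X b, ht, hab, hall a ha, hall b hb, hX a ha, hX b hb, hinter⟩
  push Not at hall
  obtain ⟨c, hc, hcnode⟩ := hall
  have hca : c ≠ a := fun h ↦ hanode (h ▸ hcnode)
  have hcb : c ≠ b := fun h ↦ hbnode (h ▸ hcnode)
  refine ⟨a, b, X a, X b, ht, hab, hanode, hbnode, hX a ha, hX b hb, ?_⟩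
  by_contra! hinter
  have hA2 : #(X a) ≤ 2 := by
    by_contra! hA3
    exact hinter.not_ge ((hX a ha).two_le_card_inter hG (hX b hb) hab hcnode hc hca hcb hA3)
  have hB2 : #(X b) ≤ 2 := by
    by_contra! hB3
    rw [inter_comm] at hinter
    exact hinter.not_ge ((hX b hb).two_le_card_inter hG (hX a ha) hab.symm hcnode hc hcb hca hB3)
  refine h3.neighbors_erase_ne hV ht (mem_neighbors.1 hc) (eq_of_subset_of_card_le
    ((hX a ha).neighbors_erase_subset_of_card_le_two (hX b hb) hab hc hca hcb hA2 hB2) ?_)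
  rw [card_erase_of_mem hc, ht,
    card_erase_of_mem (mem_neighbors.2 (adj_comm.1 (mem_neighbors.1 hc))), hcnode]

/-- The critical sets among which a maximal one is chosen: those with at least three vertices that
do not contain every vertex of degree other than three. -/
structure IsCandidate (G : FinGraph) (W : Finset ℕ) : Prop extends G.IsCritical W where
  three_le_card : 3 ≤ #W
  exists_notMem : ∃ z ∈ G.verts, z ∉ W ∧ ¬ G.IsNode z

namespace IsCrossingPair

lemma symm (h : G.IsCrossingPair t a b A B) : G.IsCrossingPair t b a B A :=
  ⟨h.isNode, h.ne.symm, h.not_isNode_right, h.not_isNode_left, h.right, h.left,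
    inter_comm A B ▸ h.two_le_card_inter⟩

lemma union_ssubset_verts (h : G.IsCrossingPair t a b A B) : A ∪ B ⊂ G.verts :=
  (ssubset_iff_of_subset (union_subset h.left.ssubset_verts.subset h.right.ssubset_verts.subset)).2
    ⟨t, h.isNode.mem_verts, notMem_union.2 ⟨h.left.notMem, h.right.notMem⟩⟩

lemma insert_union_eq_verts (h : G.IsCrossingPair t a b A B) (hG : Circuit23 G) :
    insert t (A ∪ B) = G.verts := by
  have hU := h.left.union hG h.right.toIsCritical h.two_le_card_inter h.union_ssubset_verts
  refine hU.insert_eq_verts hG h.isNode.mem_verts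
    (notMem_union.2 ⟨h.left.notMem, h.right.notMem⟩) ?_
  rw [inter_eq_left.2 (h.left.neighbors_subset_union h.right h.ne), h.isNode]

lemma isCandidate (h : G.IsCrossingPair t a b A B) : G.IsCandidate A where
  toIsCritical := h.left.toIsCritical
  three_le_card := by
    have hbA : b ∈ A := h.left.mem_of_ne h.right.mem_neighbors h.ne.symm
    have hlt : A ∩ B ⊂ A := (ssubset_iff_of_subset inter_subset_left).2
      ⟨b, hbA, fun hb ↦ h.right.notMem_of_blocked (mem_inter.1 hb).2⟩
    exact h.two_le_card_inter.trans_lt (card_lt_card hlt)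
  exists_notMem := ⟨a, neighbors_subset_verts h.left.mem_neighbors, h.left.notMem_of_blocked,
    h.not_isNode_left⟩

end IsCrossingPair

section Maximal

variable (hG : Circuit23 G) (hW : Maximal G.IsCandidate W)
include hG hW

lemma IsCritical.subset_of_maximal (hX : G.IsCritical X) (h2 : 2 ≤ #(X ∩ W)) (hz : z ∈ G.verts)
    (hzX : z ∉ X) (hzW : z ∉ W) (hznode : ¬ G.IsNode z) : X ⊆ W := by
  have hzU : z ∉ X ∪ W := notMem_union.2 ⟨hzX, hzW⟩
  have hU : X ∪ W ⊂ G.verts := (ssubset_iff_of_subset (union_subset hX.ssubset_verts.subset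
    hW.prop.ssubset_verts.subset)).2 ⟨z, hz, hzU⟩
  have hcand : G.IsCandidate (X ∪ W) := ⟨hX.union hG hW.prop.toIsCritical h2 hU,
    hW.prop.three_le_card.trans (card_le_card subset_union_right), z, hz, hzU, hznode⟩
  exact subset_union_left.trans (hW.le_of_ge hcand subset_union_right)

lemma IsNode.card_neighbors_inter_le_one (ht : G.IsNode t) (htW : t ∉ W) :
    #(G.neighbors t ∩ W) ≤ 1 := by
  obtain ⟨z, hz, hzW, hznode⟩ := hW.prop.exists_notMem
  have hzt : z ∉ insert t W := by
    rw [mem_insert, not_or]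
    exact ⟨fun h ↦ hznode (h ▸ ht), hzW⟩
  have hne : insert t W ≠ G.verts := fun h ↦ hzt (h ▸ hz)
  have hss := (insert_subset ht.mem_verts hW.prop.ssubset_verts.subset).ssubset_of_ne hne
  by_contra! h2
  rcases eq_or_lt_of_le (Nat.succ_le_of_lt h2) with h2 | h3
  · have hcand : G.IsCandidate (insert t W) := ⟨hW.prop.insert htW h2.symm hss,
      hW.prop.three_le_card.trans (card_le_card (subset_insert t W)), z, hz, hzt, hznode⟩
    exact htW (hW.le_of_ge hcand (subset_insert t W) (mem_insert_self t W))
  · exact hne (hW.prop.insert_eq_verts hG ht.mem_verts htW h3)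

/- Either blocking set swallowed by `W` would give `t` two neighbours in `W`, and so would
`{a, b} ⊆ W`. What remains is an edge at `a` running from `A \ B` to `B \ A`. -/
lemma not_isCrossingPair_of_maximal (htW : t ∉ W) (h : G.IsCrossingPair t a b A B) : False := by
  have hdeg := h.isNode.card_neighbors_inter_le_one hG hW htW
  have hWU : W ⊆ A ∪ B := fun u hu ↦ mem_of_mem_insert_of_ne
    (h.insert_union_eq_verts hG ▸ hW.prop.ssubset_verts.subset hu) (ne_of_mem_of_not_mem hu htW)
  wlog hAW : 2 ≤ #(A ∩ W) generalizing a b A B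
  · refine this h.symm (union_comm A B ▸ hWU) ?_
    have hle := card_union_le (A ∩ W) (B ∩ W)
    rw [← union_inter_distrib_right, inter_eq_right.2 hWU] at hle
    have := hW.prop.three_le_card
    omega
  have not_subset : ∀ {Y d}, G.IsBlocking Y t d → ¬ Y ⊆ W := fun hY hYW ↦ by
    have := card_le_card (inter_subset_inter_left hYW (s := G.neighbors t))
    rw [hY.card_neighbors_inter h.isNode] at this
    omega
  have haW : a ∈ W := by
    by_contra haW
    exact not_subset h.left (h.left.subset_of_maximal hG hW hAW
      (neighbors_subset_verts h.left.mem_neighbors) h.left.notMem_of_blocked haW h.not_isNode_left)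
  have hbW : b ∉ W := fun hbW ↦ h.ne (card_le_one.1 hdeg
    a (mem_inter.2 ⟨h.left.mem_neighbors, haW⟩) b (mem_inter.2 ⟨h.right.mem_neighbors, hbW⟩))
  have hBW : #(B ∩ W) ≤ 1 := by
    by_contra! hBW
    exact not_subset h.right (h.right.subset_of_maximal hG hW hBW
      (neighbors_subset_verts h.right.mem_neighbors) h.right.notMem_of_blocked hbW
      h.not_isNode_right)
  have haB : a ∈ B := h.right.mem_of_ne h.left.mem_neighbors h.ne
  obtain ⟨u, hu⟩ : (G.neighbors a ∩ W).Nonempty := card_pos.1 (by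
    have := hW.prop.two_le_card_neighbors_inter hG hW.prop.three_le_card haW
    omega)
  obtain ⟨hua, huW⟩ := mem_inter.1 hu
  have huB : u ∉ B := fun huB ↦ (mem_neighbors.1 hua).ne
    (card_le_one.1 hBW a (mem_inter.2 ⟨haB, haW⟩) u (mem_inter.2 ⟨huB, huW⟩))
  have huA : u ∈ A := (mem_union.1 (hWU huW)).resolve_right huB
  exact h.left.not_adj_of_mem_sdiff hG h.right.toIsCritical h.two_le_card_inter
    h.union_ssubset_verts (mem_sdiff.2 ⟨huA, huB⟩) (mem_sdiff.2 ⟨haB, h.left.notMem_of_blocked⟩)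
    (adj_comm.1 (mem_neighbors.1 hua))

lemma not_isBlocking_of_maximal (htW : t ∉ W) (hbW : b ∉ W) (hbnode : ¬ G.IsNode b)
    (hw : w ∈ G.neighbors t) (hwW : w ∈ W) (hwnode : G.IsNode w) (hc : c ∈ G.neighbors t)
    (hcW : c ∉ W) (hcb : c ≠ b) : ¬ G.IsBlocking X t b := by
  intro hX
  have hwX : w ∈ X := hX.mem_of_ne hw fun h ↦ hbW (h ▸ hwW)
  have hcX : c ∈ X := hX.mem_of_ne hc hcb
  have hwt : G.Adj w t := adj_comm.1 (mem_neighbors.1 hw)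
  have hNW := hW.prop.neighbors_erase_subset hG hW.prop.three_le_card hwW hwnode hwt htW
  rcases le_or_gt (#X) 2 with hX2 | hX3
  · have hwc := hX.adj_of_card_le_two hwX hcX (fun h ↦ hcW (h ▸ hwW)) hX2
    exact hcW (hNW (mem_erase.2 ⟨(Adj.ne (mem_neighbors.1 hc)).symm, mem_neighbors.2 hwc⟩))
  · have hNX := hX.neighbors_erase_subset hG hX3 hwX hwnode hwt hX.notMem
    have hinter := card_le_card (subset_inter hNX hNW)
    rw [card_erase_of_mem (mem_neighbors.2 hwt), hwnode] at hinter
    exact hcW (hX.subset_of_maximal hG hW hinter (neighbors_subset_verts hX.mem_neighbors)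
      hX.notMem_of_blocked hbW hbnode hcX)

end Maximal

/- Otherwise all degrees outside `W` are at least four, which leaves at most two edges between `W`
and its complement, and their ends in `W` form a cut. -/
lemma IsCritical.exists_isNode_notMem (h3 : ThreeConnected G) (hG : Circuit23 G)
    (hW : G.IsCritical W) (hW3 : 3 ≤ #W) : ∃ t, G.IsNode t ∧ t ∉ W := by
  by_contra! hnodes
  have hWV := hW.ssubset_verts.subset
  have hcut := G.card_edgesIn_union (disjoint_sdiff (s := W) (t := G.verts))
  rw [union_sdiff_of_subset hWV, edgesIn_verts] at hcut
  set F := G.verts \ W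
  have hdeg : ∀ y ∈ F, 4 ≤ #(G.neighbors y) := fun y hy ↦
    (hG.three_le_card_neighbors h3.1.le (mem_sdiff.1 hy).1).lt_of_ne'
      fun hynode ↦ (mem_sdiff.1 hy).2 (hnodes y hynode)
  have hdegsum : #F * 4 ≤ ∑ y ∈ F, #(G.neighbors y) := card_nsmul_le_sum F _ 4 hdeg
  have hcount := G.sum_card_neighbors_add_card_edgesIn_sdiff (X := F) sdiff_subset
  rw [Finset.sdiff_sdiff_eq_self hWV] at hcount
  have hcard : #F + #W = #G.verts := card_sdiff_add_card_eq_card hWV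
  set S := F.biUnion fun y ↦ G.neighbors y ∩ W
  have hS : #S < 3 := by
    have hSle : #S ≤ ∑ y ∈ F, #(G.neighbors y ∩ W) := card_biUnion_le
    have hedges := hG.card_edges_add_two
    have htight := hW.card_edgesIn
    omega
  have hSW : S ⊆ W := biUnion_subset.2 fun _ _ ↦ inter_subset_right
  obtain ⟨x, hxW, hxS⟩ := exists_mem_notMem_of_card_lt_card (hS.trans_le hW3)
  obtain ⟨y, hyV, hyW⟩ := exists_of_ssubset hW.ssubset_verts
  obtain ⟨p, hp, q, hq, hpq⟩ := h3.exists_adj_of_card_lt_three hS (hWV hxW)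
    (mem_sdiff.2 ⟨hxW, hxS⟩) hyV (notMem_union.2 ⟨hyW, fun h ↦ hyW (hSW h)⟩)
  obtain ⟨hpW, hpS⟩ := mem_sdiff.1 hp
  exact hpS (mem_biUnion.2 ⟨q, mem_sdiff.2 ⟨hpq.mem_verts_right, (notMem_union.1 hq).1⟩,
    mem_inter.2 ⟨mem_neighbors.2 (adj_comm.1 hpq), hpW⟩⟩)

lemma IsCandidate.exists_isNode_card_filter_le_one (h3 : ThreeConnected G)
    (hG : Circuit23 G) (hW : G.IsCandidate W) :
    ∃ t ∉ W, G.IsNode t ∧ #{u ∈ G.neighbors t \ W | G.IsNode u} ≤ 1 := by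
  set F := {v ∈ G.verts \ W | G.IsNode v} with hF
  have hFne : F.Nonempty := by
    obtain ⟨r, hr, hrW⟩ := hW.exists_isNode_notMem h3 hG hW.three_le_card
    exact ⟨r, mem_filter.2 ⟨mem_sdiff.2 ⟨hr.mem_verts, hrW⟩, hr⟩⟩
  have hFcard : #F + 2 ≤ #G.verts := by
    have hle : #F ≤ #(G.verts \ W) := card_filter_le _ _
    have hsplit := card_sdiff_add_card_eq_card hW.ssubset_verts.subset
    linarith [hW.three_le_card]
  obtain ⟨t, htF, hdeg⟩ := hG.exists_card_neighbors_inter_le_one hFne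
    (fun v hv ↦ (mem_filter.1 hv).2) hFcard
  obtain ⟨htVW, ht⟩ := mem_filter.1 htF
  refine ⟨t, (mem_sdiff.1 htVW).2, ht, ?_⟩
  rwa [hF, inter_filter, ← inter_sdiff_assoc, inter_eq_left.2 neighbors_subset_verts] at hdeg

end FinGraph

lemma Circuit23.sum_card_neighbors_add_four {G : FinGraph} (hG : Circuit23 G) :
    ∑ x ∈ G.verts, #(G.neighbors x) + 4 = 4 * #G.verts := by
  have hsum := G.sum_card_neighbors_inter G.verts
  simp only [inter_eq_left.2 neighbors_subset_verts, edgesIn_verts] at hsum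
  have := hG.card_edges_add_two
  omega

namespace FinGraph

section FullyBlocked

variable {G : FinGraph} (h3 : ThreeConnected G) (hG : Circuit23 G) (hV : 5 ≤ #G.verts)
include h3 hG hV

lemma exists_isNode_adj_not_isNode : ∃ t b, G.IsNode t ∧ G.Adj t b ∧ ¬ G.IsNode b := by
  have hsum := hG.sum_card_neighbors_add_four
  obtain ⟨x, hx, hxnode⟩ : ∃ x ∈ G.verts, G.IsNode x := by
    by_contra! hnone
    have : #G.verts * 4 ≤ _ := card_nsmul_le_sum G.verts _ 4 fun y hy ↦
      (hG.three_le_card_neighbors h3.1.le hy).lt_of_ne' (hnone y hy)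
    omega
  obtain ⟨y, hy, hynode⟩ : ∃ y ∈ G.verts, ¬ G.IsNode y := by
    by_contra! hall
    rw [sum_const_nat hall] at hsum
    omega
  obtain ⟨t, ht, b, hb, htb⟩ := h3.exists_adj_of_card_lt_three (S := ∅)
    (A := {v ∈ G.verts | G.IsNode v}) (by simp) hx (by simp [hx, hxnode]) hy (by simp [hynode])
  simp only [mem_sdiff, mem_filter, notMem_empty, not_false_eq_true, and_true] at ht
  simp only [union_empty, mem_filter, not_and] at hb
  exact ⟨t, b, ht.2, htb, hb htb.mem_verts_right⟩

lemma exists_isCandidate (H : G.IsFullyBlocked) : ∃ W, G.IsCandidate W := by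
  obtain ⟨t, b, ht, htb, hbnode⟩ := exists_isNode_adj_not_isNode h3 hG hV
  have hb : b ∈ G.neighbors t := mem_neighbors.2 htb
  by_cases hother : ∃ a ∈ G.neighbors t, a ≠ b ∧ ¬ G.IsNode a
  · obtain ⟨a, ha, hab, hanode⟩ := hother
    obtain ⟨_, _, A, _, hpair⟩ := exists_isCrossingPair h3 hG hV H ht ha hb hab hanode hbnode
    exact ⟨A, hpair.isCandidate⟩
  push Not at hother
  obtain ⟨X, hX⟩ := H t ht b hb
  refine ⟨X, hX.toIsCritical, ?_, b, htb.mem_verts_right, hX.notMem_of_blocked, hbnode⟩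
  by_contra! hX2
  obtain ⟨u, hu, w, hw, huw⟩ := one_lt_card.1 (by rw [card_erase_of_mem hb, ht]; norm_num :
    1 < #((G.neighbors t).erase b))
  rw [mem_erase] at hu hw
  exact hG.not_adj_of_isNode_triangle hV ht (hother u hu.2 hu.1) (hother w hw.2 hw.1)
    (mem_neighbors.1 hu.2) (mem_neighbors.1 hw.2)
    (hX.adj_of_card_le_two (hX.mem_of_ne hu.2 hu.1) (hX.mem_of_ne hw.2 hw.1) huw (by omega))

lemma exists_maximal_isCandidate (H : G.IsFullyBlocked) : ∃ W, Maximal G.IsCandidate W := by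
  have hfin : {W | G.IsCandidate W}.Finite := G.verts.powerset.finite_toSet.subset
    fun W hW ↦ mem_coe.2 (mem_powerset.2 hW.ssubset_verts.subset)
  obtain ⟨W₀, hW₀⟩ := exists_isCandidate h3 hG hV H
  obtain ⟨W, -, hW⟩ := hfin.exists_le_maximal hW₀
  exact ⟨W, hW⟩

theorem not_isFullyBlocked : ¬ G.IsFullyBlocked := by
  intro H
  obtain ⟨W, hW⟩ := exists_maximal_isCandidate h3 hG hV H
  obtain ⟨t, htW, ht, hdegF⟩ := hW.prop.exists_isNode_card_filter_le_one h3 hG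
  have hdegW := ht.card_neighbors_inter_le_one hG hW htW
  have hunique : ∀ a ∈ G.neighbors t, ∀ b ∈ G.neighbors t, a ≠ b → ¬ G.IsNode b → G.IsNode a := by
    by_contra! ⟨a, ha, b, hb, hab, hbnode, hanode⟩
    obtain ⟨_, _, _, _, hpair⟩ := exists_isCrossingPair h3 hG hV H ht ha hb hab hanode hbnode
    exact not_isCrossingPair_of_maximal hG hW htW hpair
  set F := {u ∈ G.neighbors t \ W | G.IsNode u}
  have hFN : F ⊆ G.neighbors t := (filter_subset _ _).trans sdiff_subset
  have hsplitF := card_sdiff_add_card_eq_card hFN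
  have hsplitW := card_sdiff_add_card_inter (G.neighbors t) W
  rw [ht] at hsplitF hsplitW
  obtain ⟨b, hb, hbF⟩ : ∃ b ∈ G.neighbors t \ W, b ∉ F :=
    exists_mem_notMem_of_card_lt_card (by omega)
  have hbnode : ¬ G.IsNode b := fun h ↦ hbF (mem_filter.2 ⟨hb, h⟩)
  obtain ⟨c, hc, hcb⟩ := exists_mem_ne (by omega : 1 < #(G.neighbors t \ W)) b
  obtain ⟨w, hw, hwb⟩ := exists_mem_ne (by omega : 1 < #(G.neighbors t \ F)) b
  rw [mem_sdiff] at hb hc hw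
  have hwnode : G.IsNode w := hunique w hw.1 b hb.1 hwb hbnode
  have hwW : w ∈ W := by
    by_contra hwW
    exact hw.2 (mem_filter.2 ⟨mem_sdiff.2 ⟨hw.1, hwW⟩, hwnode⟩)
  obtain ⟨X, hX⟩ := H t ht b hb.1
  exact not_isBlocking_of_maximal hG hW htW hb.2 hbnode hw.1 hwW hwnode hc.1 hc.2 hcb hX

end FullyBlocked

end FinGraph

/-! ### Splitting off a node -/

namespace FinGraph

variable {G : FinGraph} {X : Finset ℕ} {a b c v : ℕ}

/-- The graph obtained from `G` by splitting off `v`: delete `v` and add the edge joining its two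
neighbours `a` and `b`. -/
def splitOff (G : FinGraph) (hab : a ≠ b) (ha : G.Adj v a) (hb : G.Adj v b) : FinGraph where
  verts := G.verts.erase v
  edges := insert s(a, b) {e ∈ G.edges | v ∉ e}
  not_isDiag e he := by
    rcases mem_insert.1 he with rfl | he
    · exact mt Sym2.mk_isDiag_iff.1 hab
    · exact G.not_isDiag e (mem_filter.1 he).1
  mem_verts e he u hu := by
    rcases mem_insert.1 he with rfl | he
    · rcases Sym2.mem_iff.1 hu with rfl | rfl
      · exact mem_erase.2 ⟨ha.ne.symm, ha.mem_verts_right⟩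
      · exact mem_erase.2 ⟨hb.ne.symm, hb.mem_verts_right⟩
    · obtain ⟨heG, hve⟩ := mem_filter.1 he
      exact mem_erase.2 ⟨fun h ↦ hve (h ▸ hu), G.mem_verts e heG u hu⟩

lemma card_edgesIn_add_four_le (hG : Circuit23 G) (hv : G.IsNode v) (hc : c ∈ G.neighbors v)
    (hblock : ∀ X, ¬ G.IsBlocking X v c) (hX : X ⊂ G.verts.erase v) (h2 : 2 ≤ #X)
    (hNX : (G.neighbors v).erase c ⊆ X) : #(G.edgesIn X) + 4 ≤ 2 * #X := by
  have hXV : X ⊂ G.verts := hX.trans_subset (erase_subset v _)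
  have hvX : v ∉ X := fun h ↦ notMem_erase v _ (hX.subset h)
  have hle := hG.card_edgesIn_add_three_le hXV h2
  by_contra! hlt
  have hcrit : G.IsCritical X := ⟨hXV, h2, by omega⟩
  have hvc : G.neighbors v \ X = {c} := by
    rw [← insert_erase hc, insert_sdiff_of_notMem _ ?_, sdiff_eq_empty_iff_subset.2 hNX]
    · rfl
    · intro hcX
      have hNX' : G.neighbors v ⊆ X := insert_erase hc ▸ insert_subset hcX hNX
      have hcover := hcrit.insert_eq_verts hG hv.mem_verts hvX (by rw [inter_eq_left.2 hNX', hv])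
      exact hX.ne (by rw [← hcover, erase_insert hvX])
  exact hblock X ⟨hcrit, hvX, hvc⟩

end FinGraph

namespace Circuit23

variable {G : FinGraph} {a b c v : ℕ} (hG : Circuit23 G) (hV : 5 ≤ #G.verts) (hv : G.IsNode v)
  (hc : c ∈ G.neighbors v) (hblock : ∀ X, ¬ G.IsBlocking X v c)
  (hN : (G.neighbors v).erase c = {a, b})
include hG hV hv hc hblock hN

lemma not_adj_of_forall_not_isBlocking : ¬ G.Adj a b := by
  intro hab
  have hsub : {a, b} ⊆ G.verts.erase v := by
    rw [← hN, subset_erase]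
    exact ⟨(erase_subset c _).trans neighbors_subset_verts,
      fun h ↦ self_notMem_neighbors (mem_of_mem_erase h)⟩
  have hne : ({a, b} : Finset ℕ) ≠ G.verts.erase v := fun h ↦ by
    have := congrArg card h
    rw [card_pair hab.ne, card_erase_of_mem hv.mem_verts] at this
    omega
  have hsparse := card_edgesIn_add_four_le hG hv hc hblock (hsub.ssubset_of_ne hne)
    (card_pair hab.ne).ge hN.subset
  have hpos : 0 < #(G.edgesIn {a, b}) := card_pos.2
    ⟨s(a, b), mk_mem_edgesIn.2 ⟨hab, mem_insert_self _ _, by simp⟩⟩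
  rw [card_pair hab.ne] at hsparse
  omega

lemma card_edges_splitOff_add_two (hab : a ≠ b) (ha : G.Adj v a) (hb : G.Adj v b) :
    #(G.splitOff hab ha hb).edges + 2 = 2 * #(G.splitOff hab ha hb).verts := by
  have hnew : s(a, b) ∉ {e ∈ G.edges | v ∉ e} := fun h ↦
    hG.not_adj_of_forall_not_isBlocking hV hv hc hblock hN (mem_filter.1 h).1
  have hdeg := G.card_edgesIn_erase hv.mem_verts
  rw [inter_eq_left.2 neighbors_subset_verts, hv, edgesIn_verts, edgesIn_erase_verts] at hdeg
  have hverts := card_erase_of_mem hv.mem_verts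
  have hedges := hG.card_edges_add_two
  simp only [FinGraph.splitOff, card_insert_of_notMem hnew]
  omega

lemma splitOff (hab : a ≠ b) (ha : G.Adj v a) (hb : G.Adj v b) :
    Circuit23 (G.splitOff hab ha hb) := by
  have hcard := hG.card_edges_splitOff_add_two hV hv hc hblock hN hab ha hb
  refine ⟨by omega, fun V' E' ⟨hV', hE', hends⟩ hproper hne ↦ ?_⟩
  have hV2 : 2 ≤ #V' := by
    by_contra! hV1
    obtain ⟨e, he⟩ := hne
    have hmem : e ∈ (G.splitOff hab ha hb).edgesIn V' := mem_edgesIn.2 ⟨hE' he, hends e he⟩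
    rw [edgesIn_eq_empty_of_card_le_one (by omega)] at hmem
    exact notMem_empty e hmem
  suffices #E' + 3 ≤ 2 * #V' by omega
  by_cases hVeq : V' = (G.splitOff hab ha hb).verts
  · have hlt := card_lt_card (hE'.ssubset_of_ne (hproper.resolve_left (not_not.2 hVeq)))
    rw [hVeq]
    omega
  have hVss : V' ⊂ G.verts.erase v := hV'.ssubset_of_ne hVeq
  have hold : E'.erase s(a, b) ⊆ G.edgesIn V' := fun e he ↦ by
    obtain ⟨hne, he⟩ := mem_erase.1 he
    exact mem_edgesIn.2 ⟨(mem_filter.1 (mem_of_mem_insert_of_ne (hE' he) hne)).1, hends e he⟩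
  have hle := card_le_card hold
  by_cases hab' : s(a, b) ∈ E'
  · have hNV : (G.neighbors v).erase c ⊆ V' := by
      rw [hN, insert_subset_iff, singleton_subset_iff]
      exact ⟨hends _ hab' a (Sym2.mem_mk_left a b), hends _ hab' b (Sym2.mem_mk_right a b)⟩
    have hsparse := card_edgesIn_add_four_le hG hv hc hblock hVss hV2 hNV
    rw [card_erase_of_mem hab'] at hle
    omega
  · have hsparse := hG.card_edgesIn_add_three_le (hVss.trans_subset (erase_subset v _)) hV2
    rw [erase_eq_of_notMem hab'] at hle
    omega

end Circuit23

/-- **Berg–Jordán reduction lemma.** Let `G` be a 3-vertex-connected (2,3)-circuit with at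
least five vertices. Then `G` has a vertex `v` of degree 3 with neighbours `x`, `y`, `z` such
that deleting `v` (with its three incident edges) and adding one new edge between two of
`x`, `y`, `z` yields a (2,3)-circuit. -/
theorem statement_5 (G : FinGraph) (h3 : ThreeConnected G) (hG : Circuit23 G)
    (hV : 5 ≤ G.verts.card) :
    ∃ (v x y z a b : ℕ) (G' : FinGraph),
      x ≠ y ∧ x ≠ z ∧ y ≠ z ∧
      G.Adj v x ∧ G.Adj v y ∧ G.Adj v z ∧
      (∀ w : ℕ, G.Adj v w → w = x ∨ w = y ∨ w = z) ∧
      a ≠ b ∧ a ∈ ({x, y, z} : Finset ℕ) ∧ b ∈ ({x, y, z} : Finset ℕ) ∧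
      s(a, b) ∉ G.edges ∧
      G'.verts = G.verts.erase v ∧
      G'.edges = insert s(a, b) (G.edges.filter (fun e => v ∉ e)) ∧
      Circuit23 G' := by
  have hnot := not_isFullyBlocked h3 hG hV
  rw [IsFullyBlocked] at hnot
  push Not at hnot
  obtain ⟨v, hv, c, hc, hblock⟩ := hnot
  obtain ⟨a, b, hab, hN⟩ : ∃ a b, a ≠ b ∧ (G.neighbors v).erase c = {a, b} :=
    card_eq_two.1 (by rw [card_erase_of_mem hc, hv])
  have hac : a ∈ (G.neighbors v).erase c := hN ▸ mem_insert_self a {b}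
  have hbc : b ∈ (G.neighbors v).erase c := hN ▸ mem_insert_of_mem (mem_singleton_self b)
  have ha : G.Adj v a := mem_neighbors.1 (mem_of_mem_erase hac)
  have hb : G.Adj v b := mem_neighbors.1 (mem_of_mem_erase hbc)
  have hcover : ∀ w, G.Adj v w → w = a ∨ w = b ∨ w = c := fun w hw ↦ by
    by_cases hwc : w = c
    · exact Or.inr (Or.inr hwc)
    · have hmem : w ∈ (G.neighbors v).erase c := mem_erase.2 ⟨hwc, mem_neighbors.2 hw⟩
      rw [hN, mem_insert, mem_singleton] at hmem
      exact hmem.imp_right Or.inl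
  exact ⟨v, a, b, c, a, b, G.splitOff hab ha hb, hab, ne_of_mem_erase hac, ne_of_mem_erase hbc,
    ha, hb, mem_neighbors.1 hc, hcover, hab, by simp, by simp,
    hG.not_adj_of_forall_not_isBlocking hV hv hc hblock hN, rfl, rfl,
    hG.splitOff hV hv hc hblock hN hab ha hb⟩
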